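/- Let i_0, j_0 be coprime positive integers. For each integer m with 1 ≤ m ≤ i_0 − 1, set n'_m := i_0 − ((j_0 m) mod i_0), so that (m j_0 + n'_m)/i_0 is a positive integer. Then {(a j_0 + b, a i_0) : a, b ∈ ℝ, a > 0, b > 0} ∩ ℤ² = {(a j_0 + b, a i_0) : a, b ∈ ℤ, a ≥ 1, b ≥ 1} ∪ ⋃_{m=1}^{i_0−1} { ((m j_0 + n'_m)/i_0 + a j_0 + b, m + a i_0) : a, b ∈ ℤ, a ≥ 0, b ≥ 0 }. -/

import Mathlib

/-- **Lemma 2.5, case `c = 4`.** Let `i0, j0` be coprime positive integers and, for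
`1 ≤ m ≤ i0 - 1`, set `n'_m := i0 - ((j0 m) mod i0)`, so that `(m j0 + n'_m)/i0` is a
positive integer. Then the lattice points of the open cone
`{(a j0 + b, a i0) : a, b > 0}` are
`{(a j0 + b, a i0) : a, b ∈ ℤ, a, b ≥ 1} ∪
  ⋃_{m=1}^{i0-1} {((m j0 + n'_m)/i0 + a j0 + b, m + a i0) : a, b ∈ ℤ, a, b ≥ 0}`. -/
theorem lattice_points_of_cone (i0 j0 : ℕ) (hi0 : 0 < i0) (hj0 : 0 < j0)
    (hco : Nat.Coprime i0 j0) (n' : ℕ → ℕ) (hn' : ∀ m, n' m = i0 - (j0 * m) % i0) :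
    (∀ m : ℕ, 1 ≤ m → m ≤ i0 - 1 →
      i0 ∣ m * j0 + n' m ∧ 0 < (m * j0 + n' m) / i0) ∧
    ({x : ℝ × ℝ | ∃ a b : ℝ, 0 < a ∧ 0 < b ∧ x = (a * (j0 : ℝ) + b, a * (i0 : ℝ))} ∩
        {x : ℝ × ℝ | ∃ m n : ℤ, x = ((m : ℝ), (n : ℝ))} =
      {x : ℝ × ℝ | ∃ a b : ℕ, 1 ≤ a ∧ 1 ≤ b ∧
          x = ((a : ℝ) * (j0 : ℝ) + (b : ℝ), (a : ℝ) * (i0 : ℝ))} ∪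
        ⋃ m ∈ Finset.Icc 1 (i0 - 1),
          {x : ℝ × ℝ | ∃ a b : ℕ,
            x = (((m * j0 + n' m : ℕ) : ℝ) / (i0 : ℝ) + (a : ℝ) * (j0 : ℝ) + (b : ℝ),
                 (m : ℝ) + (a : ℝ) * (i0 : ℝ))}) := by
  have key : ∀ m, m * j0 + n' m = i0 * (j0 * m / i0 + 1) := by
    intro m
    have h1 := Nat.div_add_mod (j0 * m) i0
    have h2 := Nat.mod_lt (j0 * m) hi0
    rw [hn' m, mul_comm m j0, mul_add]
    omega
  have hiR : (0 : ℝ) < i0 := by exact_mod_cast hi0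
  have hdiv : ∀ m, ((m * j0 + n' m : ℕ) : ℝ) / (i0 : ℝ) = ((j0 * m / i0 + 1 : ℕ) : ℝ) := by
    intro m
    rw [key m, Nat.cast_mul]
    field_simp
  refine ⟨?_, ?_⟩
  · intro m _ _
    rw [key m]
    refine ⟨dvd_mul_right _ _, ?_⟩
    rw [Nat.mul_div_cancel_left _ hi0]
    exact Nat.succ_pos _
  ext x
  simp only [Set.mem_inter_iff, Set.mem_union, Set.mem_ofPred_eq, Set.mem_iUnion, hdiv,
    Finset.mem_Icc, exists_prop]
  constructor
  · rintro ⟨⟨a, b, ha, hb, rfl⟩, p, n, h⟩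
    obtain ⟨h1, h2⟩ := Prod.mk.inj h
    rw [h]
    have hn : 0 < n := by
      have : (0 : ℝ) < n := by rw [← h2]; positivity
      exact_mod_cast this
    have hp : n * j0 < p * i0 := by
      have : (n : ℝ) * j0 < p * i0 := by
        rw [← h1, ← h2]
        nlinarith [mul_pos hb hiR]
      exact_mod_cast this
    clear h h1 h2
    lift n to ℕ using hn.le
    have hp0 : 0 ≤ p := by
      by_contra hc
      push Not at hc
      have h3 : (0 : ℤ) ≤ (n : ℤ) * j0 := by positivity
      have h4 : (0 : ℤ) < i0 := by exact_mod_cast hi0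
      nlinarith
    lift p to ℕ using hp0
    norm_cast at hp hn
    have hdm := Nat.div_add_mod n i0
    have hlt := Nat.mod_lt n hi0
    set A := n / i0
    set m := n % i0
    have hA : i0 * (A * j0) + j0 * m < i0 * p := by
      rw [← hdm] at hp
      nlinarith
    rcases Nat.eq_zero_or_pos m with hm | hm
    · left
      have hlt' : A * j0 < p := by
        rw [hm] at hA
        exact Nat.lt_of_mul_lt_mul_left (a := i0) (by simpa using hA)
      obtain ⟨B, hB⟩ := Nat.exists_eq_add_of_lt hlt'
      refine ⟨A, B + 1, ?_, by omega, ?_⟩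
      · rcases Nat.eq_zero_or_pos A with h0 | h0
        · rw [h0, hm] at hdm
          omega
        · exact h0
      · rw [hB, ← hdm, hm]
        push_cast
        ext <;> simp <;> ring
    · right
      have hle : A * j0 ≤ p := by
        refine Nat.le_of_mul_le_mul_left (c := i0) ?_ hi0
        exact le_trans (Nat.le_add_right _ _) hA.le
      obtain ⟨r, hr⟩ := Nat.exists_eq_add_of_le hle
      have hr' : j0 * m / i0 < r := by
        rw [Nat.div_lt_iff_lt_mul hi0]
        rw [hr] at hA
        nlinarith
      obtain ⟨B, hB⟩ := Nat.exists_eq_add_of_lt hr'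
      refine ⟨m, ⟨hm, by omega⟩, A, B, ?_⟩
      rw [hr, hB]
      conv_lhs => rw [← hdm]
      generalize j0 * m / i0 = q
      push_cast
      ext <;> simp <;> ring
  · rintro (⟨a, b, ha, hb, rfl⟩ | ⟨m, ⟨hm1, hm2⟩, a, b, rfl⟩)
    · refine ⟨⟨a, b, by exact_mod_cast ha, by exact_mod_cast hb, rfl⟩,
        (a * j0 + b : ℕ), (a * i0 : ℕ), ?_⟩
      push_cast
      rfl
    · have hq : j0 * m < i0 * (j0 * m / i0 + 1) := Nat.lt_mul_div_succ _ hi0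
      generalize j0 * m / i0 + 1 = q at hq
      have hqR : (j0 : ℝ) * m < i0 * q := by exact_mod_cast hq
      have hmR : (0 : ℝ) < m := by exact_mod_cast hm1
      refine ⟨⟨m / i0 + a, q - j0 * m / i0 + b, by positivity, ?_, ?_⟩,
        (q + a * j0 + b : ℕ), (m + a * i0 : ℕ), ?_⟩
      · have : (j0 : ℝ) * m / i0 < q := by
          rw [div_lt_iff₀ hiR]
          linarith
        have hb : (0 : ℝ) ≤ b := Nat.cast_nonneg b
        linarith
      · ext
        · simp only
          ring
        · simp only
          field_simp
      · push_cast
        rfl
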